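/- arXiv:1910.03857 — 4 statements merged into one kernel-verified Lean document; each statement's English description precedes it below -/
import Mathlib

section
/- Fix a horizon T ∈ ℕ and, for each t ∈ {0,…,T}, a vector α_t = (α_t^0,…,α_t^t) ∈ [0,1]^{t+1}. Suppose there is a constant C_ρ ≥ 1 with π̃(a|s)/π(a|s) ≤ C_ρ for all s ∈ S, a ∈ A, and let ε = max_{s∈S, a∈A} |A^π(s,a)|. Define the random variable L̂_T(τ) = ∑_{t=0}^{T} γ^t ρ^{α_t}_{0:t}(τ) · A^π(s_t, a_t) on trajectories τ ∼ π. Then the variance satisfies Var_{τ∼π}(L̂_T) ≤ ((1 − γ^{T+1})/(1 − γ)) · ε² · ∑_{t=0}^{T} γ^t C_ρ^{2‖α_t‖₁}. -/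
open scoped BigOperators

namespace PolicyOpt

/-- A finite Markov decision process. -/
structure MDP (S A : Type*) [Fintype S] [Fintype A] where
  p : S → A → S → ℝ
  r : S → A → ℝ
  γ : ℝ
  μ0 : S → ℝ
  p_nonneg : ∀ s a s', 0 ≤ p s a s'
  p_sum_one : ∀ s a, ∑ s', p s a s' = 1
  μ0_nonneg : ∀ s, 0 ≤ μ0 s
  μ0_sum_one : ∑ s, μ0 s = 1
  γ_pos : 0 < γ
  γ_lt_one : γ < 1

variable {S A : Type*} [Fintype S] [Fintype A] [DecidableEq S] [DecidableEq A]

/-- A policy assigns to every state a probability distribution over actions. -/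
def IsPolicy (π : S → A → ℝ) : Prop :=
  (∀ s a, 0 ≤ π s a) ∧ ∀ s, ∑ a, π s a = 1

/-- Trajectory prefixes (histories) consisting of `t+1` state-action pairs. -/
abbrev Hist (S A : Type*) (t : ℕ) := Fin (t + 1) → S × A

/-- Probability of a history of length `t+1` when following policy `π`
starting from the initial distribution `μ0`. -/
noncomputable def prob (M : MDP S A) (π : S → A → ℝ) (t : ℕ) (h : Hist S A t) : ℝ :=
  (M.μ0 (h 0).1 * π (h 0).1 (h 0).2) *
    ∏ i : Fin t,
      (M.p (h i.castSucc).1 (h i.castSucc).2 (h i.succ).1 * π (h i.succ).1 (h i.succ).2)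

/-- Probability of a history of length `t+1` when following policy `π`,
conditioned on starting in state `s` with first action `a`. -/
noncomputable def probFrom (M : MDP S A) (π : S → A → ℝ) (s : S) (a : A) (t : ℕ) (h : Hist S A t) : ℝ :=
  (if h 0 = (s, a) then (1 : ℝ) else 0) *
    ∏ i : Fin t,
      (M.p (h i.castSucc).1 (h i.castSucc).2 (h i.succ).1 * π (h i.succ).1 (h i.succ).2)

/-- The last state-action pair of a history. -/
def lastSA {t : ℕ} (h : Hist S A t) : S × A := h (Fin.last t)

/-- State-action value `Q^π(s,a) = E_{τ∼π}[∑_{t≥0} γ^t r(s_t,a_t) | s₀=s, a₀=a]`. -/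
noncomputable def Qval (M : MDP S A) (π : S → A → ℝ) (s : S) (a : A) : ℝ :=
  ∑' t : ℕ, M.γ ^ t * ∑ h : Hist S A t, probFrom M π s a t h * M.r (lastSA h).1 (lastSA h).2

/-- State value `V^π(s)`. -/
noncomputable def Vval (M : MDP S A) (π : S → A → ℝ) (s : S) : ℝ :=
  ∑ a, π s a * Qval M π s a

/-- Advantage `A^π(s,a) = Q^π(s,a) - V^π(s)`. -/
noncomputable def Adv (M : MDP S A) (π : S → A → ℝ) (s : S) (a : A) : ℝ :=
  Qval M π s a - Vval M π s

/-- The value `η(π) = E_{τ∼π} ∑_{t≥0} γ^t r(s_t,a_t)`. -/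
noncomputable def ηval (M : MDP S A) (π : S → A → ℝ) : ℝ :=
  ∑' t : ℕ, M.γ ^ t * ∑ h : Hist S A t, prob M π t h * M.r (lastSA h).1 (lastSA h).2

/-- Normalised discounted state occupancy measure
`d^π(s) = (1-γ) ∑_{t≥0} γ^t Pr_{τ∼π}(s_t = s)`. -/
noncomputable def dOcc (M : MDP S A) (π : S → A → ℝ) (s : S) : ℝ :=
  (1 - M.γ) * ∑' t : ℕ, M.γ ^ t *
    ∑ h : Hist S A t, prob M π t h * (if (lastSA h).1 = s then (1 : ℝ) else 0)

/-- The surrogate objective `L_π(π') = (1/(1-γ)) ∑_s d^π(s) ∑_a π'(a|s) A^π(s,a)`. -/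
noncomputable def Lsur (M : MDP S A) (π π' : S → A → ℝ) : ℝ :=
  (1 - M.γ)⁻¹ * ∑ s, dOcc M π s * ∑ a, π' s a * Adv M π s a

/-- Product of importance sampling ratios `ρ_{0:t}` along a history. -/
noncomputable def ρprod (π π' : S → A → ℝ) {t : ℕ} (h : Hist S A t) : ℝ :=
  ∏ i, π' (h i).1 (h i).2 / π (h i).1 (h i).2

/-- Smoothed product of importance sampling ratios `ρ^{α}_{0:t}`. -/
noncomputable def ρpow (π π' : S → A → ℝ) {t : ℕ} (α : Fin (t + 1) → ℝ) (h : Hist S A t) : ℝ :=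
  ∏ i, (π' (h i).1 (h i).2 / π (h i).1 (h i).2) ^ (α i)

/-- The prefix of length `t+1` of a history of length `T+1` (for `t ≤ T`). -/
def pref {T : ℕ} (h : Hist S A T) (t : Fin (T + 1)) : Hist S A (t : ℕ) :=
  fun i => h (Fin.castLE t.isLt i)


lemma prob_nonneg' (M : MDP S A) (π : S → A → ℝ) (hπ : IsPolicy π) (T : ℕ) (h : Hist S A T) :
    0 ≤ prob M π T h := by
  unfold prob
  exact mul_nonneg (mul_nonneg (M.μ0_nonneg _) (hπ.1 _ _))
    (Finset.prod_nonneg fun i _ => mul_nonneg (M.p_nonneg _ _ _) (hπ.1 _ _))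

lemma prob_snoc' (M : MDP S A) (π : S → A → ℝ) (T : ℕ) (h : Hist S A T) (x : S × A) :
    prob M π (T + 1) (Fin.snoc (α := fun _ => S × A) h x) =
      prob M π T h * (M.p (h (Fin.last T)).1 (h (Fin.last T)).2 x.1 * π x.1 x.2) := by
  unfold prob
  rw [Fin.prod_univ_castSucc]
  have h0 : (Fin.snoc (α := fun _ => S × A) h x : Fin (T + 1 + 1) → S × A) 0 = h 0 := by
    rw [← Fin.castSucc_zero, Fin.snoc_castSucc]
  have h1 : ∀ i : Fin T, (Fin.snoc (α := fun _ => S × A) h x : Fin (T + 1 + 1) → S × A)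
      i.castSucc.succ = h i.succ := by
    intro i
    rw [Fin.succ_castSucc, Fin.snoc_castSucc]
  simp only [h0, h1, Fin.snoc_castSucc, Fin.succ_last, Fin.snoc_last]
  ring

lemma prob_sum' (M : MDP S A) (π : S → A → ℝ) (hπ : IsPolicy π) (T : ℕ) :
    ∑ h : Hist S A T, prob M π T h = 1 := by
  induction T with
  | zero =>
    rw [← (Equiv.funUnique (Fin 1) (S × A)).symm.sum_comp]
    simp only [prob, Finset.univ_eq_empty, Finset.prod_empty, mul_one, Fintype.sum_prod_type]
    simp [← Finset.mul_sum, hπ.2, M.μ0_sum_one]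
  | succ T ih =>
    rw [← (Fin.snocEquiv (fun _ : Fin (T + 1 + 1) => S × A)).sum_comp, Fintype.sum_prod_type_right,
      ← ih]
    refine Finset.sum_congr rfl fun h _ => ?_
    have : ∀ x : S × A, prob M π (T + 1) (Fin.snocEquiv (fun _ : Fin (T + 1 + 1) => S × A) (x, h)) =
        prob M π T h * (M.p (h (Fin.last T)).1 (h (Fin.last T)).2 x.1 * π x.1 x.2) :=
      fun x => prob_snoc' M π T h x
    simp only [this]
    rw [← Finset.mul_sum, Fintype.sum_prod_type]
    simp [← Finset.mul_sum, hπ.2, M.p_sum_one]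

lemma rho_bound' (π π' : S → A → ℝ) (hπ' : IsPolicy π') (hπpos : ∀ s a, 0 < π s a)
    (C : ℝ) (hC : 1 ≤ C) (hratio : ∀ s a, π' s a / π s a ≤ C) {t : ℕ}
    (α : Fin (t + 1) → ℝ) (hα : ∀ i, α i ∈ Set.Icc (0 : ℝ) 1) (h : Hist S A t) :
    (ρpow π π' α h) ^ 2 ≤ C ^ (2 * ∑ i, |α i|) := by
  have hC0 : 0 < C := by linarith
  have hr : ∀ s a, 0 ≤ π' s a / π s a := fun s a => div_nonneg (hπ'.1 s a) (hπpos s a).le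
  have h1 : ρpow π π' α h ≤ C ^ (∑ i, |α i|) := by
    unfold ρpow
    rw [Real.rpow_sum_of_pos hC0]
    refine Finset.prod_le_prod (fun i _ => Real.rpow_nonneg (hr _ _) _) fun i _ => ?_
    rw [abs_of_nonneg (hα i).1]
    exact Real.rpow_le_rpow (hr _ _) (hratio _ _) (hα i).1
  have h0 : 0 ≤ ρpow π π' α h := Finset.prod_nonneg fun i _ => Real.rpow_nonneg (hr _ _) _
  calc (ρpow π π' α h) ^ 2 ≤ (C ^ (∑ i, |α i|)) ^ 2 := pow_le_pow_left₀ h0 h1 2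
    _ = C ^ (2 * ∑ i, |α i|) := by
      rw [mul_comm, Real.rpow_mul hC0.le]; norm_num

/-- Variance bound for the truncated smoothed importance-sampling estimator. -/
theorem variance_bound_smoothed_IS
    [Nonempty S] [Nonempty A]
    (M : MDP S A) (π π' : S → A → ℝ)
    (hπ : IsPolicy π) (hπ' : IsPolicy π')
    (hπpos : ∀ s a, 0 < π s a)
    (Cρ : ℝ) (hCρ : 1 ≤ Cρ) (hratio : ∀ s a, π' s a / π s a ≤ Cρ)
    (ε : ℝ)
    (hε : ε = Finset.univ.sup' Finset.univ_nonempty fun q : S × A => |Adv M π q.1 q.2|)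
    (α : (t : ℕ) → Fin (t + 1) → ℝ) (hα : ∀ t i, α t i ∈ Set.Icc (0 : ℝ) 1)
    (T : ℕ) :
    (∑ h : Hist S A T, prob M π T h *
        (∑ t : Fin (T + 1),
          M.γ ^ (t : ℕ) * ρpow π π' (α t) (pref h t) * Adv M π (h t).1 (h t).2) ^ 2) -
      (∑ h : Hist S A T, prob M π T h *
        ∑ t : Fin (T + 1),
          M.γ ^ (t : ℕ) * ρpow π π' (α t) (pref h t) * Adv M π (h t).1 (h t).2) ^ 2 ≤
      ((1 - M.γ ^ (T + 1)) / (1 - M.γ)) * ε ^ 2 *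
        ∑ t : Fin (T + 1), M.γ ^ (t : ℕ) * Cρ ^ (2 * ∑ i, |α t i|) := by
  have hC0 : 0 < Cρ := by linarith
  have hA : ∀ s a, (Adv M π s a) ^ 2 ≤ ε ^ 2 := by
    intro s a
    have : |Adv M π s a| ≤ ε := by
      rw [hε]
      exact Finset.le_sup' (fun q : S × A => |Adv M π q.1 q.2|) (Finset.mem_univ (s, a))
    rw [← sq_abs]
    exact pow_le_pow_left₀ (abs_nonneg _) this 2
  have hg : ∑ t : Fin (T + 1), M.γ ^ (t : ℕ) = (1 - M.γ ^ (T + 1)) / (1 - M.γ) := by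
    rw [Fin.sum_univ_eq_sum_range (fun t => M.γ ^ t), geom_sum_eq M.γ_lt_one.ne,
      ← neg_sub 1 (M.γ ^ (T + 1)), ← neg_sub 1 M.γ, neg_div_neg_eq]
  have hpt : ∀ h : Hist S A T, (∑ t : Fin (T + 1),
      M.γ ^ (t : ℕ) * ρpow π π' (α t) (pref h t) * Adv M π (h t).1 (h t).2) ^ 2 ≤
      ((1 - M.γ ^ (T + 1)) / (1 - M.γ)) * ε ^ 2 *
        ∑ t : Fin (T + 1), M.γ ^ (t : ℕ) * Cρ ^ (2 * ∑ i, |α t i|) := by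
    intro h
    rw [← hg, mul_assoc, Finset.mul_sum]
    have hγ : ∀ t : Fin (T + 1), 0 ≤ M.γ ^ (t : ℕ) := fun t => pow_nonneg M.γ_pos.le _
    refine (Finset.sum_sq_le_sum_mul_sum_of_sq_eq_mul Finset.univ
      (f := fun t : Fin (T + 1) => M.γ ^ (t : ℕ))
      (g := fun t : Fin (T + 1) => M.γ ^ (t : ℕ) *
        ((ρpow π π' (α t) (pref h t)) ^ 2 * (Adv M π (h t).1 (h t).2) ^ 2))
      (fun t _ => hγ t) (fun t _ => mul_nonneg (hγ t) (by positivity))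
      (fun t _ => by ring)).trans ?_
    refine mul_le_mul_of_nonneg_left ?_ (Finset.sum_nonneg fun t _ => hγ t)
    refine Finset.sum_le_sum fun t _ => ?_
    have h1 := rho_bound' π π' hπ' hπpos Cρ hCρ hratio (α t) (hα t) (pref h t)
    have h2 := mul_le_mul h1 (hA (h t).1 (h t).2) (sq_nonneg _) (Real.rpow_nonneg hC0.le _)
    calc _ ≤ _ := mul_le_mul_of_nonneg_left h2 (hγ t)
      _ = _ := by ring
  refine (sub_le_self _ (sq_nonneg _)).trans ?_
  refine (Finset.sum_le_sum fun h _ =>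
    mul_le_mul_of_nonneg_left (hpt h) (prob_nonneg' M π hπ T h)).trans ?_
  rw [← Finset.sum_mul, prob_sum' M π hπ T, one_mul]

end PolicyOpt
end

section
/- For any two policies π and π̃, η(π̃) − η(π) = L_π(π̃) + (1/(1−γ)) · ∑_{s∈S} d^π(s) ∑_{a∈A} (Q^{π̃}(s,a) − Q^π(s,a)) · (π̃(a|s) − π(a|s)). -/
open scoped BigOperators

namespace PolicyOpt

variable {S A : Type*} [Fintype S] [Fintype A] [DecidableEq S] [DecidableEq A]

/-- One-step transition operator on state-action functions. -/
noncomputable def Top (M : MDP S A) (π : S → A → ℝ) : (S × A → ℝ) →ₗ[ℝ] (S × A → ℝ) where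
  toFun f x := ∑ y : S × A, (M.p x.1 x.2 y.1 * π y.1 y.2) * f y
  map_add' f g := by
    ext x; simp [mul_add, Finset.sum_add_distrib]
  map_smul' c f := by
    ext x; simp only [Pi.smul_apply, smul_eq_mul, RingHom.id_apply, Finset.mul_sum]
    exact Finset.sum_congr rfl fun y _ => by ring


lemma Top_apply (M : MDP S A) (π : S → A → ℝ) (f : S × A → ℝ) (x : S × A) :
    Top M π f x = ∑ y : S × A, (M.p x.1 x.2 y.1 * π y.1 y.2) * f y := rfl

lemma hist_sum (M : MDP S A) (π : S → A → ℝ) (w : S × A → ℝ) (t : ℕ) : ∀ f : S × A → ℝ,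
    ∑ h : Hist S A t, (w (h 0) * ∏ i : Fin t,
      (M.p (h i.castSucc).1 (h i.castSucc).2 (h i.succ).1 * π (h i.succ).1 (h i.succ).2))
        * f (h (Fin.last t)) = ∑ x, w x * ((Top M π)^[t] f) x := by
  induction t with
  | zero =>
    intro f
    rw [← (Equiv.funUnique (Fin 1) (S × A)).symm.sum_comp]
    simp
  | succ t ih =>
    intro f
    rw [Function.iterate_succ_apply, ← ih]
    rw [← (Fin.snocEquiv (fun _ : Fin (t + 2) => S × A)).sum_comp, Fintype.sum_prod_type,
      Finset.sum_comm]
    refine Finset.sum_congr rfl fun h _ => ?_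
    rw [Top_apply, Finset.mul_sum]
    refine Finset.sum_congr rfl fun y _ => ?_
    rw [Fin.prod_univ_castSucc]
    have h0 : (Fin.snoc h y : Fin (t + 2) → S × A) 0 = h 0 := by
      rw [← Fin.castSucc_zero]; exact Fin.snoc_castSucc (α := fun _ => S × A) _ _ _
    have hl : (Fin.snoc h y : Fin (t + 2) → S × A) (Fin.last _) = y :=
      Fin.snoc_last (α := fun _ => S × A) _ _
    have hc : ∀ i : Fin (t + 1), (Fin.snoc h y : Fin (t + 2) → S × A) i.castSucc = h i :=
      fun i => Fin.snoc_castSucc (α := fun _ => S × A) _ _ _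
    simp only [Fin.snocEquiv, Equiv.coe_fn_mk, h0, hl, hc, Fin.succ_castSucc, Fin.succ_last]
    ring

lemma row_sum (M : MDP S A) {π : S → A → ℝ} (hπ : IsPolicy π) (g : S → ℝ) (x : S × A) :
    ∑ y : S × A, (M.p x.1 x.2 y.1 * π y.1 y.2) * g y.1 = ∑ s, M.p x.1 x.2 s * g s := by
  rw [Fintype.sum_prod_type]
  refine Finset.sum_congr rfl fun s _ => ?_
  have := hπ.2 s
  simp only
  rw [← Finset.sum_mul, ← Finset.mul_sum, this, mul_one]

lemma iter_bound (M : MDP S A) {π : S → A → ℝ} (hπ : IsPolicy π) (f : S × A → ℝ) (t : ℕ) :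
    ∀ x, |((Top M π)^[t] f) x| ≤ ∑ y, |f y| := by
  induction t with
  | zero =>
    intro x
    exact Finset.single_le_sum (f := fun y => |f y|) (fun y _ => abs_nonneg _) (Finset.mem_univ x)
  | succ t ih =>
    intro x
    rw [Function.iterate_succ_apply', Top_apply]
    have h1 : ∑ y : S × A, (M.p x.1 x.2 y.1 * π y.1 y.2) * (∑ y, |f y|) = ∑ y, |f y| := by
      rw [row_sum M hπ (fun _ => ∑ y, |f y|) x, ← Finset.sum_mul, M.p_sum_one, one_mul]
    refine (Finset.abs_sum_le_sum_abs _ _).trans ?_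
    conv_rhs => rw [← h1]
    refine Finset.sum_le_sum fun y _ => ?_
    have h0 := mul_nonneg (M.p_nonneg x.1 x.2 y.1) (hπ.1 y.1 y.2)
    rw [abs_mul, abs_of_nonneg h0]
    exact mul_le_mul_of_nonneg_left (ih y) h0

lemma summ (M : MDP S A) {π : S → A → ℝ} (hπ : IsPolicy π) (f : S × A → ℝ) (x : S × A) :
    Summable fun t : ℕ => M.γ ^ t * ((Top M π)^[t] f) x := by
  refine Summable.of_norm_bounded
    ((summable_geometric_of_lt_one M.γ_pos.le M.γ_lt_one).mul_right (∑ y, |f y|)) fun t => ?_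
  rw [Real.norm_eq_abs, abs_mul, abs_of_nonneg (pow_nonneg M.γ_pos.le t)]
  exact mul_le_mul_of_nonneg_left (iter_bound M hπ f t x) (pow_nonneg M.γ_pos.le t)

/-- Resolvent. -/
noncomputable def Res (M : MDP S A) {π : S → A → ℝ} (hπ : IsPolicy π) :
    (S × A → ℝ) →ₗ[ℝ] (S × A → ℝ) where
  toFun f x := ∑' t : ℕ, M.γ ^ t * ((Top M π)^[t] f) x
  map_add' f g := by
    ext x
    simp only [Pi.add_apply]
    rw [← (summ M hπ f x).tsum_add (summ M hπ g x)]
    refine tsum_congr fun t => ?_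
    rw [← Module.End.coe_pow, map_add, Pi.add_apply]; ring
  map_smul' c f := by
    ext x
    simp only [Pi.smul_apply, smul_eq_mul, RingHom.id_apply]
    rw [← tsum_mul_left]
    refine tsum_congr fun t => ?_
    rw [← Module.End.coe_pow, map_smul, Pi.smul_apply, smul_eq_mul]; ring

lemma Res_apply (M : MDP S A) {π : S → A → ℝ} (hπ : IsPolicy π) (f : S × A → ℝ) (x : S × A) :
    Res M hπ f x = ∑' t : ℕ, M.γ ^ t * ((Top M π)^[t] f) x := rfl

lemma Res_right (M : MDP S A) {π : S → A → ℝ} (hπ : IsPolicy π) (f : S × A → ℝ) :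
    Res M hπ f = f + M.γ • Res M hπ (Top M π f) := by
  ext x
  simp only [Pi.add_apply, Pi.smul_apply, smul_eq_mul, Res_apply]
  rw [(summ M hπ f x).tsum_eq_zero_add, ← tsum_mul_left]
  congr 1
  · simp
  · exact tsum_congr fun t => by rw [Function.iterate_succ_apply]; ring

lemma Res_left (M : MDP S A) {π : S → A → ℝ} (hπ : IsPolicy π) (f : S × A → ℝ) :
    Res M hπ f = f + M.γ • Top M π (Res M hπ f) := by
  ext x
  simp only [Pi.add_apply, Pi.smul_apply, smul_eq_mul]
  rw [Top_apply, Res_apply, (summ M hπ f x).tsum_eq_zero_add]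
  congr 1
  · simp
  · simp only [Res_apply]
    simp_rw [← tsum_mul_left]
    rw [← Summable.tsum_finsetSum fun y _ => (summ M hπ f y).mul_left _, ← tsum_mul_left]
    refine tsum_congr fun t => ?_
    rw [Function.iterate_succ_apply', Top_apply, Finset.mul_sum, Finset.mul_sum]
    exact Finset.sum_congr rfl fun y _ => by ring

/-- Discounted expectation from the initial distribution. -/
lemma disc_sum (M : MDP S A) {π : S → A → ℝ} (hπ : IsPolicy π) (w f : S × A → ℝ) :
    ∑' t : ℕ, M.γ ^ t * ∑ h : Hist S A t, (w (h 0) * ∏ i : Fin t,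
      (M.p (h i.castSucc).1 (h i.castSucc).2 (h i.succ).1 * π (h i.succ).1 (h i.succ).2))
        * f (h (Fin.last t)) = ∑ x, w x * Res M hπ f x := by
  simp_rw [hist_sum, Res_apply, ← tsum_mul_left]
  rw [← Summable.tsum_finsetSum fun y _ => (summ M hπ f y).mul_left _]
  refine tsum_congr fun t => ?_
  rw [Finset.mul_sum]
  exact Finset.sum_congr rfl fun y _ => by ring

lemma Qval_eq (M : MDP S A) {π : S → A → ℝ} (hπ : IsPolicy π) (s : S) (a : A) :
    Qval M π s a = Res M hπ (fun x => M.r x.1 x.2) (s, a) := by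
  have := disc_sum M hπ (fun x => if x = (s, a) then (1 : ℝ) else 0) (fun x => M.r x.1 x.2)
  simp only [ite_mul, one_mul, zero_mul, Finset.sum_ite_eq', Finset.mem_univ, if_true] at this
  rw [← this]
  simp only [Qval, probFrom, lastSA, ite_mul, one_mul, zero_mul]

lemma eta_eq (M : MDP S A) {π : S → A → ℝ} (hπ : IsPolicy π) :
    ηval M π = ∑ x : S × A, (M.μ0 x.1 * π x.1 x.2) * Res M hπ (fun x => M.r x.1 x.2) x :=
  disc_sum M hπ (fun x => M.μ0 x.1 * π x.1 x.2) (fun x => M.r x.1 x.2)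

lemma dOcc_eq (M : MDP S A) {π : S → A → ℝ} (hπ : IsPolicy π) (s : S) :
    dOcc M π s = (1 - M.γ) * ∑ x : S × A, (M.μ0 x.1 * π x.1 x.2) *
      Res M hπ (fun x => if x.1 = s then (1 : ℝ) else 0) x := by
  rw [← disc_sum M hπ (fun x => M.μ0 x.1 * π x.1 x.2) (fun x => if x.1 = s then (1 : ℝ) else 0)]
  rfl

lemma dOcc_sum (M : MDP S A) {π : S → A → ℝ} (hπ : IsPolicy π) (g : S → ℝ) :
    (1 - M.γ)⁻¹ * ∑ s, dOcc M π s * g s = ∑ x : S × A, (M.μ0 x.1 * π x.1 x.2) *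
      Res M hπ (fun x => g x.1) x := by
  have hg : (fun x : S × A => g x.1) =
      ∑ s, g s • (fun x : S × A => if x.1 = s then (1 : ℝ) else 0) := by
    ext x; simp [Finset.sum_apply]
  have hne : 1 - M.γ ≠ 0 := by have := M.γ_lt_one; linarith
  rw [hg, map_sum]
  simp only [map_smul, Finset.sum_apply, Pi.smul_apply, smul_eq_mul, Finset.mul_sum]
  rw [Finset.sum_comm]
  refine Finset.sum_congr rfl fun s _ => ?_
  rw [dOcc_eq M hπ, ← mul_assoc, ← mul_assoc, inv_mul_cancel₀ hne, one_mul, Finset.sum_mul]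
  exact Finset.sum_congr rfl fun x _ => by ring

lemma avg_start (M : MDP S A) {π : S → A → ℝ} (hπ : IsPolicy π) (v : S → ℝ) (g : S → ℝ) :
    ∑ x : S × A, (v x.1 * π x.1 x.2) * g x.1 = ∑ s, v s * g s := by
  rw [Fintype.sum_prod_type]
  refine Finset.sum_congr rfl fun s _ => ?_
  have := hπ.2 s
  simp only
  rw [← Finset.sum_mul, ← Finset.mul_sum, this, mul_one]

lemma avg_start_pair (π : S → A → ℝ) (v : S → ℝ) (f : S × A → ℝ) :
    ∑ x : S × A, (v x.1 * π x.1 x.2) * f x = ∑ s, v s * ∑ a, π s a * f (s, a) := by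
  rw [Fintype.sum_prod_type]
  refine Finset.sum_congr rfl fun s _ => ?_
  rw [Finset.mul_sum]
  exact Finset.sum_congr rfl fun a _ => by ring

lemma Top_avg (M : MDP S A) {π : S → A → ℝ} (hπ : IsPolicy π) (f : S × A → ℝ) :
    Top M π (fun x => ∑ a, π x.1 a * f (x.1, a)) = Top M π f := by
  ext x
  rw [Top_apply, Top_apply, avg_start_pair π (M.p x.1 x.2) f,
    avg_start M hπ (M.p x.1 x.2) (fun s => ∑ a, π s a * f (s, a))]

lemma Res_avg (M : MDP S A) {π : S → A → ℝ} (hπ : IsPolicy π) (f : S × A → ℝ) :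
    ∑ x : S × A, (M.μ0 x.1 * π x.1 x.2) * Res M hπ (fun x => ∑ a, π x.1 a * f (x.1, a)) x
      = ∑ x : S × A, (M.μ0 x.1 * π x.1 x.2) * Res M hπ f x := by
  rw [Res_right M hπ f, Res_right M hπ (fun x => ∑ a, π x.1 a * f (x.1, a)), Top_avg M hπ]
  simp only [Pi.add_apply, mul_add, Finset.sum_add_distrib]
  rw [avg_start_pair π M.μ0 f, avg_start M hπ M.μ0 (fun s => ∑ a, π s a * f (s, a))]

/-- Exact error of the surrogate objective (Lemma 5 / value difference decomposition):
`η(π̃) − η(π) = L_π(π̃) + (1/(1−γ)) E_{s∼d^π} ∑_a (Q^{π̃}−Q^π)(s,a) (π̃−π)(a|s)`. -/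
theorem value_difference_decomposition
    (M : MDP S A) (π π' : S → A → ℝ)
    (hπ : IsPolicy π) (hπ' : IsPolicy π') :
    ηval M π' - ηval M π =
      Lsur M π π' +
        (1 - M.γ)⁻¹ *
          ∑ s, dOcc M π s * ∑ a, (Qval M π' s a - Qval M π s a) * (π' s a - π s a) := by
  set r : S × A → ℝ := fun x => M.r x.1 x.2 with hr
  set Q' : S × A → ℝ := Res M hπ' r with hQ'
  have hV' : ∀ s, Vval M π' s = ∑ a, π' s a * Q' (s, a) := fun s => by
    simp only [Vval, Qval_eq M hπ', hQ', hr]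
  have key : Lsur M π π' + (1 - M.γ)⁻¹ *
      ∑ s, dOcc M π s * ∑ a, (Qval M π' s a - Qval M π s a) * (π' s a - π s a)
      = (1 - M.γ)⁻¹ * ∑ s, dOcc M π s * (Vval M π' s - ∑ a, π s a * Q' (s, a)) := by
    rw [Lsur, ← mul_add, ← Finset.sum_add_distrib]
    congr 1
    refine Finset.sum_congr rfl fun s _ => ?_
    rw [← mul_add]
    congr 1
    have h1 : ∑ a, π' s a * Adv M π s a
        = ∑ a, π' s a * Qval M π s a - ∑ a, π s a * Qval M π s a := by
      simp only [Adv, mul_sub, Finset.sum_sub_distrib]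
      rw [← Finset.sum_mul, hπ'.2 s, one_mul, Vval]
    have h2 : ∀ a, Q' (s, a) = Qval M π' s a := fun a => (Qval_eq M hπ' s a).symm
    simp only [h1, h2, Vval]
    simp only [← Finset.sum_sub_distrib, ← Finset.sum_add_distrib]
    exact Finset.sum_congr rfl fun a _ => by ring
  rw [key, dOcc_sum M hπ]
  set V : S × A → ℝ := fun x => Vval M π' x.1 with hV
  have hB : Q' = r + M.γ • Top M π V := by
    rw [hQ', Res_left M hπ' r, ← hQ', ← Top_avg M hπ' Q']
    congr 2
    ext x
    simp only [← hV', Top_apply, hV]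
    rw [row_sum M hπ', row_sum M hπ]
  have hsplit : (fun x : S × A => Vval M π' x.1 - ∑ a, π x.1 a * Q' (x.1, a))
      = V - fun x => ∑ a, π x.1 a * Q' (x.1, a) := rfl
  rw [hsplit, map_sub]
  simp only [Pi.sub_apply, mul_sub, Finset.sum_sub_distrib]
  rw [Res_avg M hπ Q']
  have hRQ : Res M hπ Q' = Res M hπ r + Res M hπ V - V := by
    rw [hB, map_add, map_smul, Res_right M hπ V]
    abel
  rw [hRQ]
  simp only [Pi.sub_apply, Pi.add_apply, mul_sub, mul_add, Finset.sum_sub_distrib,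
    Finset.sum_add_distrib]
  rw [eta_eq M hπ, eta_eq M hπ', avg_start_pair π' M.μ0 (Res M hπ' fun x => M.r x.1 x.2),
    avg_start M hπ M.μ0 (fun s => Vval M π' s)]
  simp only [hV', hQ', hr]
  ring

end PolicyOpt
end

section
/- For any two policies π and π̃, η(π̃) − η(π) = (1/(1−γ)) · ∑_{s∈S} d^π(s) ∑_{a∈A} (π̃(a|s) − π(a|s)) · Q^{π̃}(s,a). -/
open scoped BigOperators

namespace PolicyOpt

variable {S A : Type*} [Fintype S] [Fintype A] [DecidableEq S] [DecidableEq A]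

section Helpers
open Matrix

theorem path_sum {X : Type*} [Fintype X] [DecidableEq X] (K : Matrix X X ℝ) (f : X → ℝ) (t : ℕ) :
    ∀ w : X → ℝ, ∑ h : Fin (t + 1) → X,
      (w (h 0) * ∏ i : Fin t, K (h i.castSucc) (h i.succ)) * f (h (Fin.last t))
      = w ⬝ᵥ ((K ^ t) *ᵥ f) := by
  induction t with
  | zero =>
    intro w
    rw [← (Equiv.funUnique (Fin 1) X).symm.sum_comp]
    simp [dotProduct]
  | succ t ih =>
    intro w
    rw [← (Fin.consEquiv (fun _ => X)).sum_comp, Fintype.sum_prod_type, Finset.sum_comm]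
    have := ih (w ᵥ* K)
    rw [pow_succ', ← mulVec_mulVec, dotProduct_mulVec, ← this]
    refine Finset.sum_congr rfl fun h _ => ?_
    simp only [vecMul, dotProduct, Finset.sum_mul]
    refine Finset.sum_congr rfl fun y _ => ?_
    rw [Fin.prod_univ_succ]
    simp only [Fin.consEquiv_apply, Fin.cons_zero, Fin.cons_succ, ← Fin.succ_castSucc,
      Fin.castSucc_zero, ← Fin.succ_last]
    ring

theorem pow_bound {X : Type*} [Fintype X] [DecidableEq X] (K : Matrix X X ℝ)
    (h0 : ∀ x y, 0 ≤ K x y) (h1 : ∀ x, ∑ y, K x y = 1) (f : X → ℝ) (t : ℕ) :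
    ∀ x, |((K ^ t) *ᵥ f) x| ≤ ∑ y, |f y| := by
  induction t with
  | zero =>
    intro x
    simpa using Finset.single_le_sum (f := fun y => |f y|) (fun y _ => abs_nonneg _)
      (Finset.mem_univ x)
  | succ t ih =>
    intro x
    rw [pow_succ', ← mulVec_mulVec]
    calc |∑ y, K x y * ((K ^ t) *ᵥ f) y| ≤ ∑ y, |K x y * ((K ^ t) *ᵥ f) y| :=
          Finset.abs_sum_le_sum_abs _ _
      _ ≤ ∑ y, K x y * ∑ y, |f y| := by
          refine Finset.sum_le_sum fun y _ => ?_
          rw [abs_mul, abs_of_nonneg (h0 x y)]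
          exact mul_le_mul_of_nonneg_left (ih y) (h0 x y)
      _ = _ := by rw [← Finset.sum_mul, h1, one_mul]

theorem summ_pt {X : Type*} [Fintype X] [DecidableEq X] (K : Matrix X X ℝ)
    (h0 : ∀ x y, 0 ≤ K x y) (h1 : ∀ x, ∑ y, K x y = 1) (f : X → ℝ) (g : ℝ) (hg : 0 < g)
    (hg1 : g < 1) (x : X) : Summable fun t : ℕ => g ^ t * ((K ^ t) *ᵥ f) x := by
  refine Summable.of_norm_bounded
    ((summable_geometric_of_lt_one hg.le hg1).mul_right (∑ y, |f y|)) fun t => ?_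
  rw [Real.norm_eq_abs, abs_mul, abs_of_nonneg (pow_nonneg hg.le t)]
  exact mul_le_mul_of_nonneg_left (pow_bound K h0 h1 f t x) (pow_nonneg hg.le t)

theorem hasSum_dot {X : Type*} [Fintype X] [DecidableEq X] (K : Matrix X X ℝ)
    (h0 : ∀ x y, 0 ≤ K x y) (h1 : ∀ x, ∑ y, K x y = 1) (f : X → ℝ) (g : ℝ) (hg : 0 < g)
    (hg1 : g < 1) (w : X → ℝ) :
    HasSum (fun t : ℕ => g ^ t * (w ⬝ᵥ ((K ^ t) *ᵥ f)))
      (w ⬝ᵥ fun x => ∑' t : ℕ, g ^ t * ((K ^ t) *ᵥ f) x) := by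
  have := hasSum_sum (s := Finset.univ) fun x _ =>
    ((summ_pt K h0 h1 f g hg hg1 x).hasSum.mul_left (w x))
  suffices e : (fun t : ℕ => g ^ t * (w ⬝ᵥ ((K ^ t) *ᵥ f))) =
      fun t : ℕ => ∑ x, w x * (g ^ t * ((K ^ t) *ᵥ f) x) by
    rw [e]; exact this
  funext t
  simp only [dotProduct, Finset.mul_sum]
  exact Finset.sum_congr rfl fun x _ => by ring

theorem bellman {X : Type*} [Fintype X] [DecidableEq X] (K : Matrix X X ℝ)
    (h0 : ∀ x y, 0 ≤ K x y) (h1 : ∀ x, ∑ y, K x y = 1) (f : X → ℝ) (g : ℝ) (hg : 0 < g)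
    (hg1 : g < 1) (Q : X → ℝ) (hQ : Q = fun x => ∑' t : ℕ, g ^ t * ((K ^ t) *ᵥ f) x) :
    f = Q - g • (K *ᵥ Q) := by
  funext x
  have e : Q x = f x + g * (K *ᵥ Q) x := by
    have h := (hasSum_dot K h0 h1 f g hg hg1 (K x)).tsum_eq
    rw [← hQ] at h
    change _ = (K *ᵥ Q) x at h
    rw [← h, ← tsum_mul_left]
    conv_lhs => rw [hQ]
    simp only
    rw [(summ_pt K h0 h1 f g hg hg1 x).tsum_eq_zero_add]
    congr 1
    · simp
    · refine tsum_congr fun t => ?_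
      rw [pow_succ' K, ← mulVec_mulVec]
      simp only [mulVec]
      ring
  simp [e]

/-- Transition kernel on state-action pairs. -/
def ker (M : MDP S A) (π : S → A → ℝ) : Matrix (S × A) (S × A) ℝ :=
  fun x y => M.p x.1 x.2 y.1 * π y.1 y.2

/-- Averaging over actions. -/
def avg (π : S → A → ℝ) (f : S × A → ℝ) : S × A → ℝ := fun x => ∑ a, π x.1 a * f (x.1, a)

theorem ker_nonneg (M : MDP S A) (π : S → A → ℝ) (hπ : IsPolicy π) (x y) : 0 ≤ ker M π x y :=
  mul_nonneg (M.p_nonneg _ _ _) (hπ.1 _ _)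

theorem ker_sum (M : MDP S A) (π : S → A → ℝ) (hπ : IsPolicy π) (x) : ∑ y, ker M π x y = 1 := by
  simp [ker, Fintype.sum_prod_type, ← Finset.mul_sum, hπ.2, M.p_sum_one]

/-- Joint sums only see the action average. -/
theorem sum_avg (π ν : S → A → ℝ) (hν : IsPolicy ν) (q : S → ℝ) (f : S × A → ℝ) :
    ∑ x : S × A, (q x.1 * ν x.1 x.2) * avg π f x = ∑ x : S × A, (q x.1 * π x.1 x.2) * f x := by
  simp only [Fintype.sum_prod_type, avg]
  refine Finset.sum_congr rfl fun s _ => ?_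
  rw [← Finset.sum_mul, ← Finset.mul_sum, hν.2, mul_one, Finset.mul_sum]
  exact Finset.sum_congr rfl fun a _ => by ring

theorem ker_avg (M : MDP S A) (π ν : S → A → ℝ) (hν : IsPolicy ν) (f : S × A → ℝ) :
    ker M ν *ᵥ avg π f = ker M π *ᵥ f := by
  funext x
  exact sum_avg π ν hν (fun s => M.p x.1 x.2 s) f

/-- Initial state-action weights. -/
def ini (M : MDP S A) (π : S → A → ℝ) : S × A → ℝ := fun x => M.μ0 x.1 * π x.1 x.2

theorem ini_avg (M : MDP S A) (π ν : S → A → ℝ) (hν : IsPolicy ν) (f : S × A → ℝ) :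
    ini M ν ⬝ᵥ avg π f = ini M π ⬝ᵥ f := sum_avg π ν hν M.μ0 f

theorem E_avg (M : MDP S A) (π : S → A → ℝ) (hπ : IsPolicy π) (f : S × A → ℝ) (t : ℕ) :
    ini M π ⬝ᵥ ((ker M π ^ t) *ᵥ avg π f) = ini M π ⬝ᵥ ((ker M π ^ t) *ᵥ f) := by
  cases t with
  | zero => simpa using ini_avg M π π hπ f
  | succ t => rw [pow_succ, ← mulVec_mulVec, ker_avg M π π hπ, mulVec_mulVec]

theorem prob_sum (M : MDP S A) (π : S → A → ℝ) (t : ℕ) (f : S × A → ℝ) :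
    ∑ h : Hist S A t, prob M π t h * f (lastSA h) = ini M π ⬝ᵥ ((ker M π ^ t) *ᵥ f) :=
  path_sum (ker M π) f t (ini M π)

theorem probFrom_sum (M : MDP S A) (π : S → A → ℝ) (s : S) (a : A) (t : ℕ) (f : S × A → ℝ) :
    ∑ h : Hist S A t, probFrom M π s a t h * f (lastSA h) = ((ker M π ^ t) *ᵥ f) (s, a) := by
  refine (path_sum (ker M π) f t (fun x => if x = (s, a) then 1 else 0)).trans ?_
  simp [dotProduct]

end Helpers

/-- Value dependency equality:
`η(π̃) − η(π) = (1/(1−γ)) ∑_s d^π(s) ∑_a (π̃(a|s) − π(a|s)) Q^{π̃}(s,a)`. -/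
theorem value_dependency_equality
    (M : MDP S A) (π π' : S → A → ℝ)
    (hπ : IsPolicy π) (hπ' : IsPolicy π') :
    ηval M π' - ηval M π =
      (1 - M.γ)⁻¹ * ∑ s, dOcc M π s * ∑ a, (π' s a - π s a) * Qval M π' s a := by
  have hg := M.γ_pos
  have hg1 := M.γ_lt_one
  have k0 := ker_nonneg M π hπ
  have k1 := ker_sum M π hπ
  have k0' := ker_nonneg M π' hπ'
  have k1' := ker_sum M π' hπ'
  set R : S × A → ℝ := fun x => M.r x.1 x.2 with hR
  set Q : S × A → ℝ := fun x => Qval M π' x.1 x.2 with hQdef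
  have hQ : Q = fun x => ∑' t : ℕ, M.γ ^ t * ((ker M π' ^ t).mulVec R) x := by
    funext x
    refine tsum_congr fun t => ?_
    rw [← probFrom_sum M π' x.1 x.2 t R]
  have hB := bellman (ker M π') k0' k1' R M.γ hg hg1 Q hQ
  have hη' : ηval M π' = dotProduct (ini M π') Q := by
    rw [hQ, ← (hasSum_dot (ker M π') k0' k1' R M.γ hg hg1 (ini M π')).tsum_eq]
    exact tsum_congr fun t => by rw [← prob_sum M π' t R]
  let E : ℕ → (S × A → ℝ) → ℝ := fun t f => dotProduct (ini M π) ((ker M π ^ t).mulVec f)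
  have hs : ∀ f, Summable fun t => M.γ ^ t * E t f := fun f =>
    (hasSum_dot (ker M π) k0 k1 f M.γ hg hg1 (ini M π)).summable
  have hη : ηval M π = ∑' t, M.γ ^ t * E t R :=
    tsum_congr fun t => congrArg (M.γ ^ t * ·) (prob_sum M π t R)
  have hsub : ∀ t f g, E t (f - g) = E t f - E t g := fun t f g => by
    simp only [E, Matrix.mulVec_sub, dotProduct_sub]
  have hstep : ∀ t, M.γ ^ t * E t R = M.γ ^ t * E t Q - M.γ ^ (t + 1) * E (t + 1) (avg π' Q) := by
    intro t
    have h1 : E (t + 1) (avg π' Q) = E t ((ker M π').mulVec Q) := by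
      simp only [E]
      rw [pow_succ, ← Matrix.mulVec_mulVec, ker_avg M π' π hπ]
    rw [h1]
    conv_lhs => rw [hB, hsub]
    simp only [E, Matrix.mulVec_smul, dotProduct_smul, smul_eq_mul]
    ring
  have hV := (hs (avg π' Q)).tsum_eq_zero_add
  have hE0 : M.γ ^ 0 * E 0 (avg π' Q) = ηval M π' := by
    rw [hη']
    simpa [E] using ini_avg M π' π hπ Q
  have hL : ηval M π' - ηval M π = ∑' t, M.γ ^ t * E t (avg π' Q - avg π Q) := by
    have e1 : ηval M π = ∑' t, M.γ ^ t * E t Q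
        - ∑' t, M.γ ^ (t + 1) * E (t + 1) (avg π' Q) := by
      rw [hη, ← (hs Q).tsum_sub ((summable_nat_add_iff 1).2 (hs (avg π' Q)))]
      exact tsum_congr hstep
    have e2 : ∑' t, M.γ ^ t * E t (avg π' Q - avg π Q)
        = ∑' t, M.γ ^ t * E t (avg π' Q) - ∑' t, M.γ ^ t * E t Q := by
      rw [← (hs (avg π' Q)).tsum_sub (hs Q)]
      refine tsum_congr fun t => ?_
      have := E_avg M π hπ Q t
      rw [hsub, mul_sub]
      simp only [E]
      rw [this]
    rw [e2, hV, hE0, e1]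
    ring
  rw [hL]
  let ind : S → S × A → ℝ := fun s x => if x.1 = s then 1 else 0
  have hd : ∀ s, dOcc M π s = (1 - M.γ) * ∑' t, M.γ ^ t * E t (ind s) := fun s => by
    unfold dOcc
    congr 1
    exact tsum_congr fun t => congrArg (M.γ ^ t * ·) (prob_sum M π t (ind s))
  have hne : (1 - M.γ) ≠ 0 := by linarith
  let G : S → ℝ := fun s => ∑ a, (π' s a - π s a) * Qval M π' s a
  have hG : avg π' Q - avg π Q = ∑ s, G s • ind s := by
    funext x
    simp [avg, G, ind, Q, sub_mul]
  have hEG : ∀ t, M.γ ^ t * E t (avg π' Q - avg π Q) = ∑ s, G s * (M.γ ^ t * E t (ind s)) := by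
    intro t
    rw [hG]
    have : E t (∑ s, G s • ind s) = ∑ s, G s * E t (ind s) := by
      simp only [E, Matrix.mulVec_sum, dotProduct_sum, Matrix.mulVec_smul, dotProduct_smul,
        smul_eq_mul]
    rw [this, Finset.mul_sum]
    exact Finset.sum_congr rfl fun s _ => by ring
  rw [tsum_congr hEG, Summable.tsum_finsetSum fun s _ => (hs (ind s)).mul_left (G s),
    Finset.mul_sum]
  refine Finset.sum_congr rfl fun s _ => ?_
  rw [hd, tsum_mul_left]
  field_simp
  simp only [G]
  ring

end PolicyOpt
end

section
/- For any two policies π and π̃ and every state s ∈ S and action a ∈ A, E_{τ∼π̃}[ ∑_{t≥1} γ^{t−1} A^π(s_t, a_t) | s₀ = s, a₀ = a ] = (1/γ) · (Q^{π̃}(s,a) − Q^π(s,a)). -/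
open scoped BigOperators

namespace PolicyOpt

variable {S A : Type*} [Fintype S] [Fintype A] [DecidableEq S] [DecidableEq A]

/-- One-step transition operator on state-action functions. -/
noncomputable def stepOp (M : MDP S A) (π : S → A → ℝ) : (S × A → ℝ) →ₗ[ℝ] (S × A → ℝ) where
  toFun f x := ∑ y : S × A, M.p x.1 x.2 y.1 * π y.1 y.2 * f y
  map_add' f g := by
    funext x
    simp [mul_add, Finset.sum_add_distrib]
  map_smul' c f := by
    funext x
    simp only [Pi.smul_apply, smul_eq_mul, RingHom.id_apply, Finset.mul_sum]
    exact Finset.sum_congr rfl fun y _ => by ring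

lemma stepOp_apply (M : MDP S A) (π : S → A → ℝ) (f : S × A → ℝ) (x : S × A) :
    stepOp M π f x = ∑ y : S × A, M.p x.1 x.2 y.1 * π y.1 y.2 * f y := rfl

lemma expect_eq (M : MDP S A) (π : S → A → ℝ) (s : S) (a : A) (t : ℕ) :
    ∀ f : S × A → ℝ, ∑ h : Hist S A t, probFrom M π s a t h * f (lastSA h)
      = ((stepOp M π) ^ t) f (s, a) := by
  induction t with
  | zero =>
    intro f
    rw [← (Equiv.funUnique (Fin 1) (S × A)).symm.sum_comp]
    simp [probFrom, lastSA]
  | succ t ih =>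
    intro f
    rw [pow_succ, Module.End.mul_apply, ← ih,
      ← (Fin.snocEquiv (fun _ : Fin (t + 2) => S × A)).sum_comp, Fintype.sum_prod_type,
      Finset.sum_comm]
    refine Finset.sum_congr rfl fun h _ => ?_
    rw [stepOp_apply, Finset.mul_sum]
    refine Finset.sum_congr rfl fun y _ => ?_
    have h0 : (Fin.snoc h y : Fin (t + 2) → S × A) 0 = h 0 :=
      Fin.snoc_castSucc (α := fun _ => S × A) y h 0
    have hc : ∀ i : Fin (t + 1), (Fin.snoc h y : Fin (t + 2) → S × A) i.castSucc = h i :=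
      fun i => Fin.snoc_castSucc (α := fun _ => S × A) y h i
    have hl : (Fin.snoc h y : Fin (t + 2) → S × A) (Fin.last (t + 1)) = y :=
      Fin.snoc_last (α := fun _ => S × A) y h
    change probFrom M π s a (t + 1) (Fin.snoc h y : Fin (t + 2) → S × A) *
      f (lastSA (Fin.snoc h y : Fin (t + 2) → S × A)) = _
    simp only [probFrom, lastSA, Fin.prod_univ_castSucc, Fin.succ_castSucc, hc, h0, hl,
      Fin.succ_last]
    ring

lemma stepOp_norm (M : MDP S A) (π : S → A → ℝ) (hπ : IsPolicy π) (f : S × A → ℝ) :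
    ‖stepOp M π f‖ ≤ ‖f‖ := by
  rw [pi_norm_le_iff_of_nonneg (norm_nonneg _)]
  intro x
  rw [stepOp_apply]
  have hw : ∀ y : S × A, 0 ≤ M.p x.1 x.2 y.1 * π y.1 y.2 := fun y =>
    mul_nonneg (M.p_nonneg _ _ _) (hπ.1 _ _)
  calc ‖∑ y : S × A, M.p x.1 x.2 y.1 * π y.1 y.2 * f y‖
      ≤ ∑ y : S × A, M.p x.1 x.2 y.1 * π y.1 y.2 * ‖f‖ := by
        refine norm_sum_le_of_le _ fun y _ => ?_
        rw [norm_mul, Real.norm_of_nonneg (hw y)]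
        exact mul_le_mul_of_nonneg_left (norm_le_pi_norm f y) (hw y)
    _ = ‖f‖ := by
        rw [← Finset.sum_mul, Fintype.sum_prod_type]
        simp [← Finset.mul_sum, hπ.2, M.p_sum_one]

lemma stepOp_pow_norm (M : MDP S A) (π : S → A → ℝ) (hπ : IsPolicy π) (f : S × A → ℝ) (t : ℕ) :
    ‖((stepOp M π) ^ t) f‖ ≤ ‖f‖ := by
  induction t with
  | zero => simp
  | succ t ih =>
    rw [pow_succ', Module.End.mul_apply]
    exact (stepOp_norm M π hπ _).trans ih

lemma summable_step (M : MDP S A) (π : S → A → ℝ) (hπ : IsPolicy π) (f : S × A → ℝ) :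
    Summable fun t : ℕ => M.γ ^ t • ((stepOp M π) ^ t) f := by
  refine Summable.of_norm_bounded
    ((summable_geometric_of_lt_one M.γ_pos.le M.γ_lt_one).mul_right ‖f‖) fun t => ?_
  rw [norm_smul, norm_pow, Real.norm_of_nonneg M.γ_pos.le]
  exact mul_le_mul_of_nonneg_left (stepOp_pow_norm M π hπ f t) (pow_nonneg M.γ_pos.le _)

lemma hasSum_Q (M : MDP S A) (π : S → A → ℝ) (hπ : IsPolicy π) :
    HasSum (fun t : ℕ => M.γ ^ t • ((stepOp M π) ^ t) (fun x => M.r x.1 x.2))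
      (fun x => Qval M π x.1 x.2) := by
  have h := (summable_step M π hπ (fun x => M.r x.1 x.2)).hasSum
  convert h using 1
  funext x
  have hx := Pi.hasSum.1 h x
  rw [← hx.tsum_eq, Qval]
  refine tsum_congr fun t => ?_
  rw [expect_eq M π x.1 x.2 t (fun x => M.r x.1 x.2)]
  rfl

/-- Resolvent identity: summing the defect `f - γ P f` recovers `f`. -/
lemma hasSum_defect (M : MDP S A) (π : S → A → ℝ) (hπ : IsPolicy π) (f : S × A → ℝ) :
    HasSum (fun t : ℕ => M.γ ^ t • ((stepOp M π) ^ t) (f - M.γ • stepOp M π f)) f := by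
  have h1 := summable_step M π hπ f
  have h2 := (summable_nat_add_iff 1).2 h1
  have h3 := h1.hasSum.sub h2.hasSum
  have h4 := h1.sum_add_tsum_nat_add 1
  simp only [Finset.sum_range_one, pow_zero, one_smul, Module.End.one_apply] at h4
  have h5 : (∑' t : ℕ, M.γ ^ t • ((stepOp M π) ^ t) f)
      - ∑' t : ℕ, M.γ ^ (t + 1) • ((stepOp M π) ^ (t + 1)) f = f := by
    rw [← h4, add_sub_cancel_right]
  rw [h5] at h3
  have e : ∀ t : ℕ, M.γ ^ t • ((stepOp M π) ^ t) (f - M.γ • stepOp M π f)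
      = M.γ ^ t • ((stepOp M π) ^ t) f - M.γ ^ (t + 1) • ((stepOp M π) ^ (t + 1)) f := by
    intro t
    rw [map_sub, map_smul, smul_sub, smul_smul, ← pow_succ, pow_succ (stepOp M π),
      Module.End.mul_apply]
  simp only [e]
  exact h3

lemma bellman_s8 (M : MDP S A) (π : S → A → ℝ) (hπ : IsPolicy π) :
    (fun x : S × A => Qval M π x.1 x.2) = (fun x => M.r x.1 x.2)
      + M.γ • stepOp M π (fun x => Qval M π x.1 x.2) := by
  have h := hasSum_Q M π hπ
  have hc : Continuous (stepOp M π) := LinearMap.continuous_of_finiteDimensional _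
  have h1 := (h.map (stepOp M π) hc).const_smul M.γ
  have h2 := h.summable.sum_add_tsum_nat_add 1
  simp only [Finset.sum_range_one, pow_zero, one_smul, Module.End.one_apply] at h2
  rw [h.tsum_eq] at h2
  rw [← h1.tsum_eq]
  refine h2.symm.trans ?_
  congr 1
  refine tsum_congr fun t => ?_
  simp only [Function.comp_apply]
  rw [map_smul, smul_smul, ← pow_succ', pow_succ' (stepOp M π), Module.End.mul_apply]

lemma step_adv (M : MDP S A) (π π' : S → A → ℝ) (hπ' : IsPolicy π') :
    stepOp M π' (fun x => Adv M π x.1 x.2) = stepOp M π' (fun x => Qval M π x.1 x.2)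
      - stepOp M π (fun x => Qval M π x.1 x.2) := by
  have e : (fun x : S × A => Adv M π x.1 x.2)
      = (fun x => Qval M π x.1 x.2) - (fun x => Vval M π x.1) := rfl
  rw [e, map_sub]
  congr 1
  funext x
  rw [stepOp_apply, stepOp_apply, Fintype.sum_prod_type, Fintype.sum_prod_type]
  refine Finset.sum_congr rfl fun s' _ => ?_
  simp only [mul_assoc, ← Finset.mul_sum, ← Finset.sum_mul, hπ'.2, one_mul]
  rfl

/-- `E_{τ∼π̃}[∑_{t≥1} γ^{t−1} A^π(s_t,a_t) | s₀=s, a₀=a] = (Q^{π̃}(s,a) − Q^π(s,a))/γ`. -/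
theorem expected_future_advantage_eq_Q_difference
    (M : MDP S A) (π π' : S → A → ℝ)
    (hπ : IsPolicy π) (hπ' : IsPolicy π') (s : S) (a : A) :
    (∑' t : ℕ, M.γ ^ t *
        ∑ h : Hist S A (t + 1),
          probFrom M π' s a (t + 1) h * Adv M π (lastSA h).1 (lastSA h).2) =
      M.γ⁻¹ * (Qval M π' s a - Qval M π s a) := by
  have hγ : M.γ ≠ 0 := M.γ_pos.ne'
  have key : stepOp M π' (fun x => Adv M π x.1 x.2) = M.γ⁻¹ • ((fun x => M.r x.1 x.2)
      - ((fun x => Qval M π x.1 x.2) - M.γ • stepOp M π' (fun x => Qval M π x.1 x.2))) := by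
    rw [step_adv M π π' hπ']
    have hb := bellman_s8 M π hπ
    funext x
    have hx := congrFun hb x
    simp only [Pi.add_apply, Pi.smul_apply, smul_eq_mul, Pi.sub_apply] at hx ⊢
    field_simp
    linarith
  have hs := ((hasSum_Q M π' hπ').sub
    (hasSum_defect M π' hπ' (fun x => Qval M π x.1 x.2))).const_smul M.γ⁻¹
  have hx := Pi.hasSum.1 hs (s, a)
  refine Eq.trans (tsum_congr fun t => ?_) hx.tsum_eq
  rw [expect_eq M π' s a (t + 1) (fun x => Adv M π x.1 x.2), pow_succ, Module.End.mul_apply, key,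
    map_smul, map_sub]
  simp only [Pi.smul_apply, smul_eq_mul, Pi.sub_apply]
  ring

end PolicyOpt
end
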